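/- Let (X,d,f) be a TDS. If the neutralized topological entropy equals the classical topological entropy, \tilde h_top(f,X) = h_top(f,X), then h_top(f,X) = lim_{ε→0} lim_{α→0} h_top^α(f,X,ε) = sup_{ε>0} inf_{α>0} h_top^α(f,X,ε). -/

import Mathlib

open Filter Set MeasureTheory ENNReal
open scoped Classical NNReal

noncomputable section

namespace AlphaBS

variable {X : Type*}

/-- Birkhoff sum `S_n φ (x) = ∑_{j<n} φ(f^j x)`. -/
def birk (f : X → X) (φ : X → ℝ) (n : ℕ) (x : X) : ℝ :=
  ∑ j ∈ Finset.range n, φ (f^[j] x)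

/-- The α-Bowen ball `B_n^α(x,ε) = {y : d_n^α(x,y) < ε}`, where
`d_n^α(x,y) = max_{0 ≤ i ≤ n-1} e^{αi} d(f^i x, f^i y)`, w.r.t. an explicit distance `d`. -/
def bowenBall (d : X → X → ℝ) (f : X → X) (α : ℝ) (n : ℕ) (x : X) (ε : ℝ) : Set X :=
  {y | ∀ i < n, Real.exp (α * i) * d (f^[i] x) (f^[i] y) < ε}

section covers

variable (d : X → X → ℝ) (f : X → X)

/-- `M^α(K,s,ε,n,φ)`: infimum over countable families of α-Bowen balls covering `K`. -/
def Mpre (φ : X → ℝ) (α s ε : ℝ) (N : ℕ) (K : Set X) : ℝ≥0∞ :=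
  ⨅ (c : ℕ → X) (m : ℕ → ℕ) (I : Set ℕ) (_ : I.Nonempty) (_ : ∀ i ∈ I, N ≤ m i)
    (_ : K ⊆ ⋃ i ∈ I, bowenBall d f α (m i) (c i) ε),
    ∑' i : I, ENNReal.ofReal
      (Real.exp (-s * sSup (birk f φ (m i) '' bowenBall d f α (m i) (c i) ε)))

/-- `M^α(K,s,ε,φ) = lim_{n→∞} M^α(K,s,ε,n,φ)` (the quantity is nondecreasing in `n`). -/
def Mlim (φ : X → ℝ) (α s ε : ℝ) (K : Set X) : ℝ≥0∞ := ⨆ N : ℕ, Mpre d f φ α s ε N K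

/-- `M^α(K,ε,φ) = inf {s ≥ 0 : M^α(K,s,ε,φ) = 0}`. -/
def Mcrit (φ : X → ℝ) (α ε : ℝ) (K : Set X) : EReal :=
  ⨅ (s : ℝ) (_ : 0 ≤ s) (_ : Mlim d f φ α s ε K = 0), (s : EReal)

/-- The α-BS dimension `dim_BS^α(f,K,φ) = lim_{ε→0} M^α(K,ε,φ)`
(the quantity is nonincreasing in `ε`). -/
def dimBS (φ : X → ℝ) (α : ℝ) (K : Set X) : EReal :=
  ⨆ (ε : ℝ) (_ : 0 < ε), Mcrit d f φ α ε K

/-- `M^{α,1}(K,s,ε,n,φ)`: the variant with weights `exp(-s·S_{n_i}φ(x_i))` at the centers. -/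
def M1pre (φ : X → ℝ) (α s ε : ℝ) (N : ℕ) (K : Set X) : ℝ≥0∞ :=
  ⨅ (c : ℕ → X) (m : ℕ → ℕ) (I : Set ℕ) (_ : I.Nonempty) (_ : ∀ i ∈ I, N ≤ m i)
    (_ : K ⊆ ⋃ i ∈ I, bowenBall d f α (m i) (c i) ε),
    ∑' i : I, ENNReal.ofReal (Real.exp (-s * birk f φ (m i) (c i)))

def M1lim (φ : X → ℝ) (α s ε : ℝ) (K : Set X) : ℝ≥0∞ := ⨆ N : ℕ, M1pre d f φ α s ε N K

def M1crit (φ : X → ℝ) (α ε : ℝ) (K : Set X) : EReal :=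
  ⨅ (s : ℝ) (_ : 0 ≤ s) (_ : M1lim d f φ α s ε K = 0), (s : EReal)

/-- The modified α-BS dimension `\widetilde{dim}_{BS}^α(f,K,φ)`. -/
def dimBS1 (φ : X → ℝ) (α : ℝ) (K : Set X) : EReal :=
  ⨆ (ε : ℝ) (_ : 0 < ε), M1crit d f φ α ε K

/-- `M^α(K,s,ε,n,1)`: covering quantity with weights `exp(-s n_i)`. -/
def Epre (α s ε : ℝ) (N : ℕ) (K : Set X) : ℝ≥0∞ :=
  ⨅ (c : ℕ → X) (m : ℕ → ℕ) (I : Set ℕ) (_ : I.Nonempty) (_ : ∀ i ∈ I, N ≤ m i)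
    (_ : K ⊆ ⋃ i ∈ I, bowenBall d f α (m i) (c i) ε),
    ∑' i : I, ENNReal.ofReal (Real.exp (-s * (m i : ℝ)))

def Elim (α s ε : ℝ) (K : Set X) : ℝ≥0∞ := ⨆ N : ℕ, Epre d f α s ε N K

def Ecrit (α ε : ℝ) (K : Set X) : EReal :=
  ⨅ (s : ℝ) (_ : 0 ≤ s) (_ : Elim d f α s ε K = 0), (s : EReal)

/-- The α-Bowen topological entropy `h_top^{α,B}(f,K)` (i.e. `dim_BS^α(f,K,1)`,
computed with weights `exp(-s n_i)`). -/
def entB (α : ℝ) (K : Set X) : EReal := ⨆ (ε : ℝ) (_ : 0 < ε), Ecrit d f α ε K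

/-- `ℳ_B^α(K,s,ε,n,h)`: the Pesin pressure covering quantity. -/
def Ppre (h : X → ℝ) (α s ε : ℝ) (N : ℕ) (K : Set X) : ℝ≥0∞ :=
  ⨅ (c : ℕ → X) (m : ℕ → ℕ) (I : Set ℕ) (_ : I.Nonempty) (_ : ∀ i ∈ I, N ≤ m i)
    (_ : K ⊆ ⋃ i ∈ I, bowenBall d f α (m i) (c i) ε),
    ∑' i : I, ENNReal.ofReal
      (Real.exp (-s * (m i : ℝ) + sSup (birk f h (m i) '' bowenBall d f α (m i) (c i) ε)))

def Plim (h : X → ℝ) (α s ε : ℝ) (K : Set X) : ℝ≥0∞ := ⨆ N : ℕ, Ppre d f h α s ε N K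

/-- `ℳ_B^α(K,ε,h) = inf {s ∈ ℝ : ℳ_B^α(K,s,ε,h) = 0}`. -/
def Pcrit (h : X → ℝ) (α ε : ℝ) (K : Set X) : EReal :=
  ⨅ (s : ℝ) (_ : Plim d f h α s ε K = 0), (s : EReal)

/-- The α-Pesin topological pressure `P_B^α(f,K,h)`. -/
def pressureB (h : X → ℝ) (α : ℝ) (K : Set X) : EReal :=
  ⨆ (ε : ℝ) (_ : 0 < ε), Pcrit d f h α ε K

/-- `W^α(K,s,ε,n,φ)`: the weighted covering quantity. -/
def Wpre (φ : X → ℝ) (α s ε : ℝ) (N : ℕ) (K : Set X) : ℝ≥0∞ :=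
  ⨅ (c : ℕ → X) (m : ℕ → ℕ) (w : ℕ → ℝ) (I : Set ℕ) (_ : I.Nonempty)
    (_ : ∀ i ∈ I, N ≤ m i) (_ : ∀ i ∈ I, 0 < w i)
    (_ : ∀ x ∈ K, (1 : ℝ≥0∞) ≤
      ∑' i : I, (bowenBall d f α (m i) (c i) ε).indicator
        (fun _ => ENNReal.ofReal (w i)) x),
    ∑' i : I, ENNReal.ofReal (w i * Real.exp (-s * birk f φ (m i) (c i)))

def Wlim (φ : X → ℝ) (α s ε : ℝ) (K : Set X) : ℝ≥0∞ := ⨆ N : ℕ, Wpre d f φ α s ε N K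

def Wcrit (φ : X → ℝ) (α ε : ℝ) (K : Set X) : EReal :=
  ⨅ (s : ℝ) (_ : 0 ≤ s) (_ : Wlim d f φ α s ε K = 0), (s : EReal)

/-- The weighted α-BS dimension `dim_BS^{α,W}(f,K,φ)`. -/
def dimBSW (φ : X → ℝ) (α : ℝ) (K : Set X) : EReal :=
  ⨆ (ε : ℝ) (_ : 0 < ε), Wcrit d f φ α ε K

/-- `r_n(f,α,X,ε)`: the smallest cardinality of an `(n,α,ε)`-spanning set of `X`. -/
def spanNum (α ε : ℝ) (n : ℕ) : ℕ :=
  sInf {m : ℕ | ∃ E : Finset X, E.card = m ∧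
    ∀ x : X, ∃ y ∈ E, ∀ i < n, Real.exp (α * i) * d (f^[i] y) (f^[i] x) < ε}

/-- `h_top^α(f,X,ε) = limsup_n (1/n) log r_n(f,α,X,ε)`. -/
def htopSpanE (α ε : ℝ) : EReal :=
  limsup (fun n : ℕ => ((Real.log (spanNum d f α ε n) / n : ℝ) : EReal)) atTop

/-- the α-topological entropy `h_top^α(f,X) = lim_{ε→0} h_top^α(f,X,ε)`
(the quantity is nonincreasing in `ε`). -/
def htopSpan (α : ℝ) : EReal := ⨆ (ε : ℝ) (_ : 0 < ε), htopSpanE d f α ε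

/-- `r_n(X, e^{-nε})`: smallest number of ε-neutralized Bowen balls needed to cover `X`. -/
def neutNum (ε : ℝ) (n : ℕ) : ℕ :=
  sInf {m : ℕ | ∃ E : Finset X, E.card = m ∧
    ∀ x : X, ∃ y ∈ E, ∀ j < n, d (f^[j] y) (f^[j] x) < Real.exp (-(n : ℝ) * ε)}

/-- the neutralized ε-topological entropy. -/
def neutEntE (ε : ℝ) : EReal :=
  limsup (fun n : ℕ => ((Real.log (neutNum d f ε n) / n : ℝ) : EReal)) atTop

/-- the neutralized topological entropy `\tilde h_top(f,X) = inf_{ε>0} \tilde h_top(f,X,ε)`. -/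
def neutEnt : EReal := ⨅ (ε : ℝ) (_ : 0 < ε), neutEntE d f ε

end covers

/-- `-log t`, valued in `[0,∞]` for `t ∈ [0,1]`, with `-log 0 = ∞`. -/
def negLog (t : ℝ≥0∞) : ℝ≥0∞ := if t = 0 then ⊤ else ENNReal.ofReal (-Real.log t.toReal)

section measure

variable [MeasurableSpace X]

/-- `P_μ^α(f,x,φ) = lim_{ε→0} liminf_n (-log μ(B_n^α(x,ε)))/S_nφ(x)`. -/
def localBKphi (d : X → X → ℝ) (f : X → X) (φ : X → ℝ) (α : ℝ) (μ : Measure X)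
    (x : X) : ℝ≥0∞ :=
  ⨆ (ε : ℝ) (_ : 0 < ε),
    liminf (fun n : ℕ =>
      negLog (μ (bowenBall d f α n x ε)) / ENNReal.ofReal (birk f φ n x)) atTop

/-- The α-local Brin–Katok entropy `P_μ^α(f,φ) = ∫ P_μ^α(f,x,φ) dμ(x)`. -/
def BKphi (d : X → X → ℝ) (f : X → X) (φ : X → ℝ) (α : ℝ) (μ : Measure X) : ℝ≥0∞ :=
  ∫⁻ x, localBKphi d f φ α μ x ∂μ

/-- `lim_{ε→0} liminf_n (-log μ(B_n^α(x,ε)))/n`. -/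
def localBKn (d : X → X → ℝ) (f : X → X) (α : ℝ) (μ : Measure X) (x : X) : ℝ≥0∞ :=
  ⨆ (ε : ℝ) (_ : 0 < ε),
    liminf (fun n : ℕ => negLog (μ (bowenBall d f α n x ε)) / (n : ℝ≥0∞)) atTop

/-- The lower α-local Brin–Katok entropy `\underline h_μ^{BK}(f,α)`. -/
def BKn (d : X → X → ℝ) (f : X → X) (α : ℝ) (μ : Measure X) : ℝ≥0∞ :=
  ∫⁻ x, localBKn d f α μ x ∂μ

end measure

/-- diameter of a set w.r.t. an explicit distance. -/
def ediamD (d : X → X → ℝ) (U : Set X) : ℝ≥0∞ :=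
  ⨆ (x ∈ U) (y ∈ U), ENNReal.ofReal (d x y)

/-- pre-Hausdorff measure at scale `δ`. -/
def hausPre (d : X → X → ℝ) (s δ : ℝ) (E : Set X) : ℝ≥0∞ :=
  ⨅ (U : ℕ → Set X) (_ : E ⊆ ⋃ i, U i) (_ : ∀ i, ediamD d (U i) ≤ ENNReal.ofReal δ),
    ∑' i, ediamD d (U i) ^ s

/-- `s`-dimensional Hausdorff measure w.r.t. an explicit distance. -/
def hausMeas (d : X → X → ℝ) (s : ℝ) (E : Set X) : ℝ≥0∞ :=
  ⨆ (δ : ℝ) (_ : 0 < δ), hausPre d s δ E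

/-- Hausdorff dimension w.r.t. an explicit distance:
`dim_H(E,d) = inf {s ≥ 0 : H^s(E) = 0}`. -/
def hausDim (d : X → X → ℝ) (E : Set X) : ℝ≥0∞ :=
  ⨅ (s : ℝ≥0) (_ : hausMeas d s E = 0), (s : ℝ≥0∞)

/-- The left shift on `Σ_k^+ = {0,…,k-1}^ℕ`. -/
def shiftMap (k : ℕ) : (ℕ → Fin k) → (ℕ → Fin k) := fun x n => x (n + 1)

/-- The metric `d(x,y) = e^{-n(x,y)}` on `Σ_k^+`, where `n(x,y)` is the least index
at which `x` and `y` differ, and `d(x,x) = 0`. -/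
def shiftDist {k : ℕ} (x y : ℕ → Fin k) : ℝ :=
  if x = y then 0 else Real.exp (-((sInf {n : ℕ | x n ≠ y n} : ℕ) : ℝ))

/-- The subshift of finite type `Σ_A^+` determined by the incidence matrix `A`. -/
def SFT {k : ℕ} (A : Matrix (Fin k) (Fin k) ℝ) : Type :=
  {x : ℕ → Fin k // ∀ n, A (x n) (x (n + 1)) = 1}

/-- The left shift restricted to `Σ_A^+`. -/
def sftShift {k : ℕ} (A : Matrix (Fin k) (Fin k) ℝ) : SFT A → SFT A :=
  fun x => ⟨fun n => x.1 (n + 1), fun n => x.2 (n + 1)⟩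

/-- The metric `d` restricted to `Σ_A^+`. -/
def sftDist {k : ℕ} (A : Matrix (Fin k) (Fin k) ℝ) : SFT A → SFT A → ℝ :=
  fun x y => shiftDist x.1 y.1

end AlphaBS

open AlphaBS

/-!
Always `h_top(f,X) ≤ sup_ε inf_α h_top^α(f,X,ε) ≤ \tilde h_top(f,X)`, so equality of the two ends
forces equality throughout. The left inequality holds because the `α`-Bowen metrics increase with
`α`. For the right one, points that are `e^{-nδ}`-close along `n` steps are `ε`-close for the
`α`-Bowen metric as soon as `0 ≤ α < δ` and `e^{-n(δ-α)} ≤ ε`.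

Since `spanNum` is `0` when no finite spanning set exists, comparing spanning numbers requires such
sets. To find one, code each point by its itinerary through finite nets and keep one point per
itinerary.
-/

namespace AlphaBS

theorem limsup_log_div_le_limsup_log_div {u v : ℕ → ℕ} (h : ∀ᶠ n in atTop, u n ≤ v n) :
    limsup (fun n : ℕ => ((Real.log (u n) / n : ℝ) : EReal)) atTop ≤
      limsup (fun n : ℕ => ((Real.log (v n) / n : ℝ) : EReal)) atTop := by
  refine limsup_le_limsup ?_
  filter_upwards [h] with n huv
  have hlog : Real.log (u n) ≤ Real.log (v n) := by
    obtain hu | hu := (u n).eq_zero_or_pos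
    · simpa [hu] using Real.log_natCast_nonneg (v n)
    · exact Real.log_le_log (by exact_mod_cast hu) (by exact_mod_cast huv)
  exact EReal.coe_le_coe (by gcongr)

theorem exists_finset_forall_dist_lt {X Y ι : Type*} [PseudoMetricSpace Y] [Finite ι]
    (hY : TotallyBounded (univ : Set Y)) (g : ι → X → Y) {r : ι → ℝ} (hr : ∀ i, 0 < r i) :
    ∃ E : Finset X, ∀ x, ∃ y ∈ E, ∀ i, dist (g i y) (g i x) < r i := by
  choose net hfin hnet using fun i => Metric.totallyBounded_iff.1 hY (r i / 2) (half_pos (hr i))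
  have hnear (i : ι) (z : Y) : ∃ c : net i, dist z c < r i / 2 := by
    simpa using hnet i (mem_univ z)
  choose center hcenter using hnear
  let itinerary (x : X) (i : ι) : net i := center i (g i x)
  have (i : ι) : Finite (net i) := hfin i
  refine ⟨(finite_range (rangeSplitting itinerary)).toFinset, fun x => ?_⟩
  let y := rangeSplitting itinerary ⟨itinerary x, mem_range_self x⟩
  have hy : itinerary y = itinerary x := apply_rangeSplitting itinerary _
  refine ⟨y, by simp [y], fun i => ?_⟩
  have hc : center i (g i y) = center i (g i x) := congrFun hy i
  calc dist (g i y) (g i x)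
      ≤ dist (g i y) (center i (g i x)) + dist (g i x) (center i (g i x)) :=
        dist_triangle_right _ _ _
    _ < r i / 2 + r i / 2 := add_lt_add (hc ▸ hcenter i (g i y)) (hcenter i (g i x))
    _ = r i := add_halves (r i)

/-- `E` is an `(n,α,ε)`-spanning set of `X`: every point is within `d_n^α`-distance `< ε` of `E`.
The condition on `d_n^α` is written out, index by index, as in `spanNum`. -/
def IsSpanning {X : Type*} (d : X → X → ℝ) (f : X → X) (α ε : ℝ) (n : ℕ) (E : Finset X) : Prop :=
  ∀ x : X, ∃ y ∈ E, ∀ i < n, Real.exp (α * i) * d (f^[i] y) (f^[i] x) < ε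

section ArbitraryDistance

variable {X : Type*} {d : X → X → ℝ} {f : X → X} {α β δ ε : ℝ} {n : ℕ} {E : Finset X}

theorem IsSpanning.of_exp_mul_le (hE : IsSpanning d f α ε n E)
    (h : ∀ i < n, Real.exp (β * i) * ε ≤ Real.exp (α * i) * δ) : IsSpanning d f β δ n E := by
  intro x
  obtain ⟨y, hyE, hy⟩ := hE x
  refine ⟨y, hyE, fun i hi => lt_of_mul_lt_mul_left ?_ (Real.exp_pos (α * i)).le⟩
  calc Real.exp (α * i) * (Real.exp (β * i) * d (f^[i] y) (f^[i] x))
      = Real.exp (β * i) * (Real.exp (α * i) * d (f^[i] y) (f^[i] x)) := mul_left_comm _ _ _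
    _ < Real.exp (β * i) * ε := mul_lt_mul_of_pos_left (hy i hi) (Real.exp_pos _)
    _ ≤ Real.exp (α * i) * δ := h i hi

theorem IsSpanning.spanNum_le_card (hE : IsSpanning d f α ε n E) : spanNum d f α ε n ≤ E.card :=
  Nat.sInf_le ⟨E, rfl, hE⟩

theorem IsSpanning.exists_card_eq_spanNum (hE : IsSpanning d f α ε n E) :
    ∃ E' : Finset X, E'.card = spanNum d f α ε n ∧ IsSpanning d f α ε n E' :=
  Nat.sInf_mem (s := {m | ∃ E : Finset X, E.card = m ∧ IsSpanning d f α ε n E}) ⟨_, E, rfl, hE⟩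

theorem neutNum_eq_spanNum (d : X → X → ℝ) (f : X → X) (δ : ℝ) (n : ℕ) :
    neutNum d f δ n = spanNum d f 0 (Real.exp (-(n : ℝ) * δ)) n := by
  simp only [neutNum, spanNum, zero_mul, Real.exp_zero, one_mul]

end ArbitraryDistance

section TotallyBounded

variable {X : Type*} [PseudoMetricSpace X] {α δ ε : ℝ}

theorem exists_isSpanning (hX : TotallyBounded (univ : Set X)) (f : X → X) (α : ℝ) (hε : 0 < ε)
    (n : ℕ) : ∃ E : Finset X, IsSpanning dist f α ε n E := by
  obtain ⟨E, hE⟩ := exists_finset_forall_dist_lt hX (fun i : Fin n => f^[i])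
    (r := fun i => ε / Real.exp (α * (i : ℕ))) fun i => div_pos hε (Real.exp_pos _)
  refine ⟨E, fun x => ?_⟩
  obtain ⟨y, hyE, hy⟩ := hE x
  exact ⟨y, hyE, fun i hi => (lt_div_iff₀' (Real.exp_pos _)).1 (hy ⟨i, hi⟩)⟩

theorem spanNum_le_spanNum (hX : TotallyBounded (univ : Set X)) (f : X → X) (hε : 0 < ε)
    {β : ℝ} {n : ℕ} (h : ∀ i < n, Real.exp (β * i) * ε ≤ Real.exp (α * i) * δ) :
    spanNum dist f β δ n ≤ spanNum dist f α ε n := by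
  obtain ⟨E₀, hE₀⟩ := exists_isSpanning hX f α hε n
  obtain ⟨E, hcard, hE⟩ := hE₀.exists_card_eq_spanNum
  exact hcard ▸ (hE.of_exp_mul_le h).spanNum_le_card

theorem monotone_htopSpanE (hX : TotallyBounded (univ : Set X)) (f : X → X) (hε : 0 < ε) :
    Monotone fun α => htopSpanE dist f α ε := fun α β hαβ =>
  limsup_log_div_le_limsup_log_div <| .of_forall fun n =>
    spanNum_le_spanNum hX f hε fun i _ => by gcongr

theorem eventually_spanNum_le_neutNum (hX : TotallyBounded (univ : Set X)) (f : X → X)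
    (hα : 0 ≤ α) (hαδ : α < δ) (hε : 0 < ε) :
    ∀ᶠ n in atTop, spanNum dist f α ε n ≤ neutNum dist f δ n := by
  have htendsto : Tendsto (fun n : ℕ => (n : ℝ) * (δ - α)) atTop atTop :=
    tendsto_natCast_atTop_atTop.atTop_mul_const (sub_pos.2 hαδ)
  filter_upwards [htendsto.eventually_ge_atTop (-Real.log ε)] with n hn
  rw [neutNum_eq_spanNum]
  refine spanNum_le_spanNum hX f (Real.exp_pos _) fun i hi => ?_
  have hin : α * i ≤ α * n := by gcongr
  calc Real.exp (α * i) * Real.exp (-(n : ℝ) * δ)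
      = Real.exp (α * i + -(n : ℝ) * δ) := (Real.exp_add _ _).symm
    _ ≤ Real.exp (Real.log ε) := Real.exp_le_exp.2 (by linarith)
    _ = Real.exp (0 * i) * ε := by rw [Real.exp_log hε, zero_mul, Real.exp_zero, one_mul]

theorem htopSpanE_le_neutEntE (hX : TotallyBounded (univ : Set X)) (f : X → X)
    (hα : 0 ≤ α) (hαδ : α < δ) (hε : 0 < ε) : htopSpanE dist f α ε ≤ neutEntE dist f δ :=
  limsup_log_div_le_limsup_log_div (eventually_spanNum_le_neutNum hX f hα hαδ hε)

theorem htopSpan_zero_le_iSup_iInf_htopSpanE (hX : TotallyBounded (univ : Set X)) (f : X → X) :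
    htopSpan dist f 0 ≤ ⨆ (ε : ℝ) (_ : 0 < ε), ⨅ (α : ℝ) (_ : 0 < α), htopSpanE dist f α ε :=
  iSup₂_mono fun _ hε => le_iInf₂ fun _ hα => monotone_htopSpanE hX f hε hα.le

theorem iSup_iInf_htopSpanE_le_neutEnt (hX : TotallyBounded (univ : Set X)) (f : X → X) :
    ⨆ (ε : ℝ) (_ : 0 < ε), ⨅ (α : ℝ) (_ : 0 < α), htopSpanE dist f α ε ≤ neutEnt dist f :=
  iSup₂_le fun _ hε => le_iInf₂ fun δ hδ =>
    iInf₂_le_of_le (δ / 2) (half_pos hδ) <|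
      htopSpanE_le_neutEntE hX f (half_pos hδ).le (half_lt_self hδ) hε

end TotallyBounded

end AlphaBS

theorem stmt19_general {X : Type*} [PseudoMetricSpace X] (hX : TotallyBounded (univ : Set X))
    (f : X → X) (hle : neutEnt dist f ≤ htopSpan dist f 0) :
    htopSpan dist f 0 =
      ⨆ (ε : ℝ) (_ : 0 < ε), ⨅ (α : ℝ) (_ : 0 < α), htopSpanE dist f α ε :=
  (htopSpan_zero_le_iSup_iInf_htopSpanE hX f).antisymm
    ((iSup_iInf_htopSpanE_le_neutEnt hX f).trans hle)

/-- if the neutralized topological entropy equals the classical topological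
entropy, then `h_top(f,X) = lim_{ε→0} lim_{α→0} h_top^α(f,X,ε)
= sup_{ε>0} inf_{α>0} h_top^α(f,X,ε)`. -/
theorem stmt19 {X : Type*} [MetricSpace X] [CompactSpace X]
    (f : X → X) (hf : Continuous f)
    (heq : neutEnt dist f = htopSpan dist f 0) :
    htopSpan dist f 0 =
      ⨆ (ε : ℝ) (_ : 0 < ε), ⨅ (α : ℝ) (_ : 0 < α), htopSpanE dist f α ε := by
  exact stmt19_general isCompact_univ.totallyBounded f heq.le

end
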